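/- Let e ≥ 1 and q = 2^(2e+1). Then the three natural numbers q − 1, q + 2^(e+1) + 1 and q − 2^(e+1) + 1 are all odd and pairwise coprime (so that together with 4 they form four pairwise coprime numbers). -/

import Mathlib

/-- For `q = 2 ^ (2 * e + 1)` with `e ≥ 1`, the numbers `q - 1`, `q + 2 ^ (e + 1) + 1`
and `q - 2 ^ (e + 1) + 1` are all odd and pairwise coprime; together with `4` they form
four pairwise coprime numbers. -/
theorem suzuki_orders_pairwise_coprime (e q : ℕ) (he : 1 ≤ e) (hq : q = 2 ^ (2 * e + 1)) :
    Odd (q - 1) ∧ Odd (q + 2 ^ (e + 1) + 1) ∧ Odd (q - 2 ^ (e + 1) + 1) ∧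
    Nat.Coprime (q - 1) (q + 2 ^ (e + 1) + 1) ∧
    Nat.Coprime (q - 1) (q - 2 ^ (e + 1) + 1) ∧
    Nat.Coprime (q + 2 ^ (e + 1) + 1) (q - 2 ^ (e + 1) + 1) ∧
    Nat.Coprime 4 (q - 1) ∧
    Nat.Coprime 4 (q + 2 ^ (e + 1) + 1) ∧
    Nat.Coprime 4 (q - 2 ^ (e + 1) + 1) := by
  obtain ⟨t, ht⟩ : ∃ t, t = 2 ^ e := ⟨_, rfl⟩
  have ht2 : 2 ≤ t := by
    rw [ht]
    calc 2 = 2 ^ 1 := rfl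
      _ ≤ 2 ^ e := Nat.pow_le_pow_right (by norm_num) he
  have hr : 2 ^ (e + 1) = 2 * t := by rw [ht]; ring
  have hq2 : q = 2 * (t * t) := by rw [hq, ht]; ring
  rw [hr]
  clear hq hr ht he
  subst hq2
  have h1 : 2 * t ≤ t * t := Nat.mul_le_mul_right t ht2
  obtain ⟨A, hA⟩ : ∃ A, A = 2 * (t * t) - 1 := ⟨_, rfl⟩
  obtain ⟨B, hB⟩ : ∃ B, B = 2 * (t * t) + 2 * t + 1 := ⟨_, rfl⟩
  obtain ⟨C, hC⟩ : ∃ C, C = 2 * (t * t) - 2 * t + 1 := ⟨_, rfl⟩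
  rw [← hA, ← hB, ← hC]
  have oA : Odd A := ⟨t * t - 1, by omega⟩
  have oB : Odd B := ⟨t * t + t, by omega⟩
  have oC : Odd C := ⟨t * t - t, by omega⟩
  have zA : (A : ℤ) = 2 * (t * t) - 1 := by
    have : A + 1 = 2 * (t * t) := by omega
    have : (A : ℤ) + 1 = 2 * (t * t) := by exact_mod_cast this
    linarith
  have zB : (B : ℤ) = 2 * (t * t) + 2 * t + 1 := by exact_mod_cast hB
  have zC : (C : ℤ) = 2 * (t * t) - 2 * t + 1 := by
    have : C + 2 * t = 2 * (t * t) + 1 := by omega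
    have : (C : ℤ) + 2 * t = 2 * (t * t) + 1 := by exact_mod_cast this
    linarith
  have four : ∀ n : ℕ, Odd n → Nat.Coprime 4 n := fun n hn =>
    Nat.Coprime.pow_left 2 (Nat.coprime_two_left.mpr hn)
  refine ⟨oA, oB, oC, ?_, ?_, ?_, four A oA, four B oB, four C oC⟩
  · rw [← Nat.isCoprime_iff_coprime]
    refine ⟨1 + (t * t - 1) * (2 * (t * t) + 1), -(t * t - 1) * C, ?_⟩
    rw [zA, zB, zC]; ring
  · rw [← Nat.isCoprime_iff_coprime]
    refine ⟨1 + (t * t - 1) * (2 * (t * t) + 1), -(t * t - 1) * B, ?_⟩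
    rw [zA, zB, zC]; ring
  · rw [← Nat.isCoprime_iff_coprime]
    refine ⟨t * (t - 1) ^ 2, 1 - 2 * t * (t - 1) - t * (t - 1) ^ 2, ?_⟩
    rw [zB, zC]; ring
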